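/- arXiv:2406.11094 — 2 statements merged into one kernel-verified Lean document; each statement's English description precedes it below -/
import Mathlib

section
/- Let T₁ and T₂ be two closed downward-pointing unit equilateral triangles in the plane (each a translate of the triangle with vertices (0,0), (1,0), (1/2, −√3/2)) whose interiors are disjoint. For each triangle, let its anchor be the midpoint of its top (horizontal) side, and consider the closed regular hexagon of side length 1/2 centered at the anchor with one pair of sides horizontal (the hexagon with vertices at distance 1/2 from the anchor at angles 0°, 60°, 120°, 180°, 240°, 300°). Then the interiors of the two hexagons are disjoint. -/
/-!
Both bodies have the same difference body. For the triangle `T` and the hexagon `H`, the set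
`T - T` is the regular hexagon of side `1`, and since `H` is centrally symmetric, `H - H = 2 H` is
that hexagon too. Hence the interiors of two translates meet, for `T` as for `H`, exactly when the
translation vector lies in the interior of this hexagon of side `1`.

Concretely, a common interior point of the two hexagons satisfies the side inequalities of each
strictly (`lt_of_mem_interior_hexagon`); subtracting them in pairs yields six strict linear
inequalities on `v₁ - v₂`. These are what is needed for the three strict
half-plane conditions of each open triangle to be simultaneously solvable, because three such
conditions in the directions normal to a triangle are solvable as soon as the corresponding sum of
bounds has the right sign. The solution is a common interior point of the triangles
(`mem_interior_downTriangle_add`).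
-/

open Real

/-- The closed downward-pointing unit equilateral triangle with top side from `(0,0)` to `(1,0)`. -/
def downTriangle : Set (ℝ × ℝ) :=
  convexHull ℝ {(0, 0), (1, 0), (1 / 2, -Real.sqrt 3 / 2)}

/-- The closed regular hexagon of side length `1/2`, centered at `p`, with vertices at
angles `60°·k` from the center. -/
def hexagon (p : ℝ × ℝ) : Set (ℝ × ℝ) :=
  convexHull ℝ
    {q | ∃ k : Fin 6,
      q = p + (1 / 2 * Real.cos (k * π / 3), 1 / 2 * Real.sin (k * π / 3))}

/-- A linear functional that is not zero and bounded by `c` on a set is strictly below `c` on the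
interior, since it is an open map. -/
lemma lt_of_mem_interior_of_le {S : Set (ℝ × ℝ)} {a b c : ℝ} (hab : a ≠ 0 ∨ b ≠ 0)
    (hS : ∀ q ∈ S, a * q.1 + b * q.2 ≤ c) {q : ℝ × ℝ} (hq : q ∈ interior S) :
    a * q.1 + b * q.2 < c := by
  let f : ℝ × ℝ →L[ℝ] ℝ :=
    a • ContinuousLinearMap.fst ℝ ℝ ℝ + b • ContinuousLinearMap.snd ℝ ℝ ℝ
  have hf : ∀ x, f x = a * x.1 + b * x.2 := fun x => by simp [f]
  have hsurj : Function.Surjective f := by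
    intro t
    rcases hab with h | h
    · exact ⟨(t / a, 0), by rw [hf]; field_simp; ring⟩
    · exact ⟨(0, t / b), by rw [hf]; field_simp; ring⟩
  have hopen : IsOpen (f '' interior S) := f.isOpenMap hsurj _ isOpen_interior
  have hsub : f '' interior S ⊆ Set.Iic c := by
    rintro _ ⟨x, hx, rfl⟩
    rw [Set.mem_Iic, hf]
    exact hS x (interior_subset hx)
  have h := interior_maximal hsub hopen ⟨q, hq, rfl⟩
  rw [interior_Iic, Set.mem_Iio, hf] at h
  exact h

lemma le_of_mem_hexagon {p : ℝ × ℝ} {a b c : ℝ}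
    (hv : ∀ k : Fin 6, a * (1 / 2 * cos (k * π / 3)) + b * (1 / 2 * sin (k * π / 3)) ≤ c) :
    ∀ q ∈ hexagon p, a * q.1 + b * q.2 ≤ a * p.1 + b * p.2 + c := by
  have hconv : Convex ℝ {q : ℝ × ℝ | a * q.1 + b * q.2 ≤ a * p.1 + b * p.2 + c} := by
    apply convex_halfSpace_le
    constructor
    · intro x y; simp; ring
    · intro t x; simp; ring
  refine convexHull_min ?_ hconv
  rintro _ ⟨k, rfl⟩
  have := hv k
  change a * (p.1 + 1 / 2 * cos (k * π / 3)) + b * (p.2 + 1 / 2 * sin (k * π / 3)) ≤ _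
  linarith

lemma hexagon_vertex (k : Fin 6) :
    ((cos (k * π / 3) = 1 ∨ cos (k * π / 3) = -1) ∧ sin (k * π / 3) = 0) ∨
    ((cos (k * π / 3) = 1 / 2 ∨ cos (k * π / 3) = -1 / 2) ∧
      (sin (k * π / 3) = √3 / 2 ∨ sin (k * π / 3) = -√3 / 2)) := by
  have h2 : 2 * π / 3 = π - π / 3 := by ring
  have h3 : 3 * π / 3 = π := by ring
  have h4 : 4 * π / 3 = π / 3 + π := by ring
  have h5 : 5 * π / 3 = -(π / 3) + 2 * π := by ring
  fin_cases k
  · simp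
  · right; simp
  · right; simp [h2, cos_pi_sub, sin_pi_sub, neg_div]
  · left; simp [h3]
  · right; simp [h4, neg_div, cos_add_pi, sin_add_pi]
  · right; simp [h5, neg_div, cos_add_two_pi, sin_add_two_pi]

/-- The interior of the hexagon lies in the open half-planes bounded by its six sides. -/
lemma lt_of_mem_interior_hexagon {p q : ℝ × ℝ} (hq : q ∈ interior (hexagon p)) :
    |q.2 - p.2| < √3 / 4 ∧ |√3 * (q.1 - p.1) + (q.2 - p.2)| < √3 / 2 ∧
      |√3 * (q.1 - p.1) - (q.2 - p.2)| < √3 / 2 := by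
  have h0 : 0 < √3 := by positivity
  have key : ∀ a b c : ℝ, (a ≠ 0 ∨ b ≠ 0) →
      (∀ x y : ℝ, ((x = 1 ∨ x = -1) ∧ y = 0) ∨
        ((x = 1 / 2 ∨ x = -1 / 2) ∧ (y = √3 / 2 ∨ y = -√3 / 2)) →
        a * (1 / 2 * x) + b * (1 / 2 * y) ≤ c) →
      a * q.1 + b * q.2 < a * p.1 + b * p.2 + c := fun a b c hab h =>
    lt_of_mem_interior_of_le hab (le_of_mem_hexagon fun k => h _ _ (hexagon_vertex k)) hq
  have e1 := key 0 1 (√3 / 4) (by simp) (by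
    rintro x y (⟨rfl | rfl, rfl⟩ | ⟨rfl | rfl, rfl | rfl⟩) <;> linarith)
  have e2 := key 0 (-1) (√3 / 4) (by simp) (by
    rintro x y (⟨rfl | rfl, rfl⟩ | ⟨rfl | rfl, rfl | rfl⟩) <;> linarith)
  have e3 := key (√3) 1 (√3 / 2) (by simp) (by
    rintro x y (⟨rfl | rfl, rfl⟩ | ⟨rfl | rfl, rfl | rfl⟩) <;> linarith)
  have e4 := key (-√3) (-1) (√3 / 2) (by simp) (by
    rintro x y (⟨rfl | rfl, rfl⟩ | ⟨rfl | rfl, rfl | rfl⟩) <;> linarith)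
  have e5 := key (√3) (-1) (√3 / 2) (by simp) (by
    rintro x y (⟨rfl | rfl, rfl⟩ | ⟨rfl | rfl, rfl | rfl⟩) <;> linarith)
  have e6 := key (-√3) 1 (√3 / 2) (by simp) (by
    rintro x y (⟨rfl | rfl, rfl⟩ | ⟨rfl | rfl, rfl | rfl⟩) <;> linarith)
  simp only [abs_lt]
  refine ⟨⟨?_, ?_⟩, ⟨?_, ?_⟩, ?_, ?_⟩ <;> linarith

/-- The intersection of the three half-planes is contained in the triangle: the three
(normalised) slacks are the barycentric coordinates. -/
lemma mem_downTriangle {x y : ℝ} (h1 : y ≤ 0) (h2 : 0 ≤ √3 * x + y)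
    (h3 : 0 ≤ √3 * (1 - x) + y) : (x, y) ∈ downTriangle := by
  have h0 : 0 < √3 := by positivity
  have hmem : ∀ i ∈ (Finset.univ : Finset (Fin 3)),
      (![((0 : ℝ), (0 : ℝ)), (1, 0), (1 / 2, -√3 / 2)] : Fin 3 → ℝ × ℝ) i ∈ downTriangle := by
    intro i _
    apply subset_convexHull
    fin_cases i <;> simp
  have hw : ∀ i ∈ (Finset.univ : Finset (Fin 3)),
      0 ≤ (![(√3 * (1 - x) + y) / √3, (√3 * x + y) / √3, -2 * y / √3] : Fin 3 → ℝ) i := by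
    intro i _
    fin_cases i
    · exact div_nonneg h3 h0.le
    · exact div_nonneg h2 h0.le
    · exact div_nonneg (by linarith) h0.le
  have hs : ∑ i, (![(√3 * (1 - x) + y) / √3, (√3 * x + y) / √3, -2 * y / √3] : Fin 3 → ℝ) i
      = 1 := by
    simp only [Fin.sum_univ_three, Matrix.cons_val]
    field_simp
    ring
  have h := (convex_convexHull ℝ _ : Convex ℝ downTriangle).sum_mem hw hs hmem
  simp only [Fin.sum_univ_three, Matrix.cons_val, Prod.smul_mk, Prod.mk_add_mk, smul_eq_mul] at h
  have hx : x = (√3 * (1 - x) + y) / √3 * 0 + (√3 * x + y) / √3 * 1 + -2 * y / √3 * (1 / 2) := by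
    field_simp
    ring
  have hy : y = (√3 * (1 - x) + y) / √3 * 0 + (√3 * x + y) / √3 * 0 +
      -2 * y / √3 * (-√3 / 2) := by
    field_simp
    ring
  rw [← hx, ← hy] at h
  exact h

lemma mem_interior_downTriangle_add {v q : ℝ × ℝ} (h1 : q.2 < v.2)
    (h2 : √3 * v.1 + v.2 < √3 * q.1 + q.2)
    (h3 : -√3 * v.1 + v.2 - √3 < -√3 * q.1 + q.2) :
    q ∈ interior ((fun x => x + v) '' downTriangle) := by
  have hopen : IsOpen {q : ℝ × ℝ | q.2 < v.2 ∧ √3 * v.1 + v.2 < √3 * q.1 + q.2 ∧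
      -√3 * v.1 + v.2 - √3 < -√3 * q.1 + q.2} :=
    IsOpen.and (isOpen_lt (by fun_prop) (by fun_prop))
      (IsOpen.and (isOpen_lt (by fun_prop) (by fun_prop)) (isOpen_lt (by fun_prop) (by fun_prop)))
  refine interior_maximal ?_ hopen ⟨h1, h2, h3⟩
  rintro r ⟨g1, g2, g3⟩
  exact ⟨(r.1 - v.1, r.2 - v.2), mem_downTriangle (by linarith) (by linarith) (by linarith),
    by ext <;> simp⟩

theorem stmt_6 (v₁ v₂ : ℝ × ℝ)
    (hdisj : interior ((fun x => x + v₁) '' downTriangle) ∩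
        interior ((fun x => x + v₂) '' downTriangle) = ∅) :
    interior (hexagon (v₁ + (1 / 2, 0))) ∩ interior (hexagon (v₂ + (1 / 2, 0))) = ∅ := by
  rw [Set.eq_empty_iff_forall_notMem] at hdisj ⊢
  rintro q ⟨hq1, hq2⟩
  obtain ⟨a1, a2, a3⟩ := lt_of_mem_interior_hexagon hq1
  obtain ⟨b1, b2, b3⟩ := lt_of_mem_interior_hexagon hq2
  simp only [Prod.fst_add, Prod.snd_add, abs_lt] at a1 a2 a3 b1 b2 b3
  have h0 : 0 < √3 := by positivity
  -- The common points of the open triangles are the `(x, y)` with `y < m`, `A < √3 x + y` and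
  -- `B < -√3 x + y`.
  obtain ⟨m, hm1, hm2, hm⟩ : ∃ m, m ≤ v₁.2 ∧ m ≤ v₂.2 ∧ (m = v₁.2 ∨ m = v₂.2) :=
    ⟨min v₁.2 v₂.2, min_le_left _ _, min_le_right _ _, min_choice _ _⟩
  obtain ⟨A, hA1, hA2, hA⟩ : ∃ A, √3 * v₁.1 + v₁.2 ≤ A ∧ √3 * v₂.1 + v₂.2 ≤ A ∧
      (A = √3 * v₁.1 + v₁.2 ∨ A = √3 * v₂.1 + v₂.2) :=
    ⟨max _ _, le_max_left _ _, le_max_right _ _, max_choice _ _⟩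
  obtain ⟨B, hB1, hB2, hB⟩ : ∃ B, -√3 * v₁.1 + v₁.2 - √3 ≤ B ∧ -√3 * v₂.1 + v₂.2 - √3 ≤ B ∧
      (B = -√3 * v₁.1 + v₁.2 - √3 ∨ B = -√3 * v₂.1 + v₂.2 - √3) :=
    ⟨max _ _, le_max_left _ _, le_max_right _ _, max_choice _ _⟩
  have hAB : A + B < 2 * m := by
    rcases hm with h | h <;> rcases hA with j | j <;> rcases hB with k | k <;>
      rw [h, j, k] <;> linarith
  -- Distributing the slack `d` equally over the three conditions gives a solution.
  set d := (2 * m - A - B) / 4 with hd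
  have hd0 : 0 < d := by rw [hd]; linarith
  have hx : √3 * ((A - B) / (2 * √3)) = (A - B) / 2 := by field_simp
  refine hdisj ((A - B) / (2 * √3), m - d) ⟨?_, ?_⟩ <;>
    apply mem_interior_downTriangle_add <;> simp only [neg_mul, hx] at * <;> linarith
end

section
/- Let S be a finite nonempty set of positive integers that is good. Then there exists a nonnegative integer k such that |S| = 2^k; indeed, every element of S is a product of exactly k pairwise distinct primes. -/
/-!
For `s ∈ S`, the map `t ↦ gcd s t` is a bijection from `S` onto the divisors of `s`, so `|S|` is the
number of divisors of every `s ∈ S` (`GoodSet.card_eq`). If `p` is a prime divisor of `s`, the bijection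
restricts to one between the elements of `S` prime to `p` and the divisors of the `p`-free part of `s`
(`GoodSet.card_filter_eq`). Hence `|S| = (v_p(s) + 1) * N` with `N > 0` the number of elements of `S`
prime to `p`, and `v_p(s)` is the same for all `s ∈ S` divisible by `p`. If `p ^ 2 ∣ s`, the `t ∈ S` with
`gcd s t = p` has `v_p(t) = 1 < v_p(s)`, a contradiction. So all elements are squarefree, and an element
with `k` prime factors has `2 ^ k = |S|` divisors, which makes `k` constant.
-/

/-- A finite set `S` of positive integers is *good* if for each `s ∈ S` and each
positive divisor `d` of `s`, there is a unique `t ∈ S` with `gcd s t = d`. -/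
def GoodSet (S : Finset ℕ) : Prop :=
  (∀ s ∈ S, 0 < s) ∧
  ∀ s ∈ S, ∀ d : ℕ, 0 < d → d ∣ s → ∃! t, t ∈ S ∧ Nat.gcd s t = d

theorem GoodSet.injOn_gcd {S : Finset ℕ} (hS : GoodSet S) {s : ℕ} (hs : s ∈ S) :
    Set.InjOn (Nat.gcd s) S := by
  intro a ha b hb hab
  exact (hS.2 s hs (Nat.gcd s a) (Nat.gcd_pos_of_pos_left _ (hS.1 s hs))
    (Nat.gcd_dvd_left _ _)).unique ⟨ha, rfl⟩ ⟨hb, hab.symm⟩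

theorem GoodSet.card_eq {S : Finset ℕ} (hS : GoodSet S) {s : ℕ} (hs : s ∈ S) :
    S.card = s.divisors.card := by
  have h0 := hS.1 s hs
  refine Finset.card_bij (fun t _ => Nat.gcd s t) ?_ ?_ ?_
  · intro t _
    exact Nat.mem_divisors.2 ⟨Nat.gcd_dvd_left _ _, h0.ne'⟩
  · intro a ha b hb hab
    exact hS.injOn_gcd hs ha hb hab
  · intro d hd
    have hd' := Nat.dvd_of_mem_divisors hd
    obtain ⟨t, ⟨ht, htd⟩, -⟩ := hS.2 s hs d (Nat.pos_of_dvd_of_pos hd' h0) hd'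
    exact ⟨t, ht, htd⟩

theorem GoodSet.card_filter_eq {S : Finset ℕ} (hS : GoodSet S) {s p : ℕ} (hs : s ∈ S)
    (hp : p.Prime) (hps : p ∣ s) :
    (S.filter (fun t => ¬ p ∣ t)).card = (s / p ^ s.factorization p).divisors.card := by
  have h0 := hS.1 s hs
  refine Finset.card_bij (fun t _ => Nat.gcd s t) ?_ ?_ ?_
  · intro t ht
    have hpt := (Finset.mem_filter.1 ht).2
    refine Nat.mem_divisors.2 ⟨?_, (Nat.ordCompl_pos p h0.ne').ne'⟩
    have hc : Nat.Coprime (Nat.gcd s t) (p ^ s.factorization p) := by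
      refine Nat.Coprime.pow_right _ (Nat.Coprime.symm ((Nat.Prime.coprime_iff_not_dvd hp).2 ?_))
      exact fun h => hpt (h.trans (Nat.gcd_dvd_right _ _))
    refine hc.dvd_of_dvd_mul_left ?_
    rw [Nat.ordProj_mul_ordCompl_eq_self]
    exact Nat.gcd_dvd_left _ _
  · intro a ha b hb hab
    exact hS.injOn_gcd hs (Finset.mem_filter.1 ha).1 (Finset.mem_filter.1 hb).1 hab
  · intro d hd
    have hd' := Nat.dvd_of_mem_divisors hd
    have hds := hd'.trans (Nat.ordCompl_dvd s p)
    obtain ⟨t, ⟨ht, htd⟩, -⟩ := hS.2 s hs d (Nat.pos_of_dvd_of_pos hds h0) hds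
    refine ⟨t, Finset.mem_filter.2 ⟨ht, fun hpt => ?_⟩, htd⟩
    have hpd : p ∣ d := htd ▸ Nat.dvd_gcd hps hpt
    exact Nat.not_dvd_ordCompl hp h0.ne' (hpd.trans hd')

theorem GoodSet.card_eq_mul {S : Finset ℕ} (hS : GoodSet S) {s p : ℕ} (hs : s ∈ S)
    (hp : p.Prime) (hps : p ∣ s) :
    S.card = (s.factorization p + 1) * (S.filter (fun t => ¬ p ∣ t)).card := by
  have h0 := hS.1 s hs
  have hc : Nat.Coprime (p ^ s.factorization p) (s / p ^ s.factorization p) :=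
    Nat.Coprime.pow_left _ (Nat.coprime_ordCompl hp h0.ne')
  have h := hc.card_divisors_mul
  rw [Nat.ordProj_mul_ordCompl_eq_self, Nat.divisors_prime_pow hp, Finset.card_map,
    Finset.card_range] at h
  rw [hS.card_filter_eq hs hp hps, hS.card_eq hs, h]

theorem GoodSet.squarefree {S : Finset ℕ} (hS : GoodSet S) {s : ℕ} (hs : s ∈ S) :
    Squarefree s := by
  have h0 := hS.1 s hs
  rw [Nat.squarefree_iff_prime_squarefree]
  intro p hp hpp
  have hps : p ∣ s := (Dvd.intro p rfl).trans hpp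
  obtain ⟨t, ⟨ht, htp⟩, -⟩ := hS.2 s hs p hp.pos hps
  have hpt : p ∣ t := htp ▸ Nat.gcd_dvd_right s t
  have ht0 := hS.1 t ht
  have hs2 : 2 ≤ s.factorization p :=
    (hp.pow_dvd_iff_le_factorization h0.ne').1 (by rwa [pow_two])
  have ht2 : ¬ 2 ≤ t.factorization p := by
    intro h
    have h2 := (hp.pow_dvd_iff_le_factorization ht0.ne').2 h
    have h3 : p * p ∣ p * 1 := by
      have := Nat.dvd_gcd hpp ((pow_two p) ▸ h2)
      simpa only [htp, mul_one] using this
    exact hp.one_lt.ne' (Nat.dvd_one.1 (Nat.dvd_of_mul_dvd_mul_left hp.pos h3))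
  have e1 := hS.card_eq_mul hs hp hps
  have e2 := hS.card_eq_mul ht hp hpt
  have hpos : 0 < (S.filter (fun t => ¬ p ∣ t)).card := by
    rw [hS.card_filter_eq hs hp hps]
    exact Finset.card_pos.2 ⟨1, Nat.one_mem_divisors.2 (Nat.ordCompl_pos p h0.ne').ne'⟩
  have := Nat.eq_of_mul_eq_mul_right hpos (e1.symm.trans e2)
  omega

theorem GoodSet.card_eq_two_pow {S : Finset ℕ} (hS : GoodSet S) {s : ℕ} (hs : s ∈ S) :
    S.card = 2 ^ s.primeFactors.card := by
  have h0 := (hS.1 s hs).ne'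
  rw [hS.card_eq hs, Nat.card_divisors h0]
  refine Finset.prod_eq_pow_card fun p hp => ?_
  rw [Nat.factorization_eq_one_of_squarefree (hS.squarefree hs) (Nat.prime_of_mem_primeFactors hp)
    (Nat.dvd_of_mem_primeFactors hp)]

theorem stmt_14 (S : Finset ℕ) (hS : GoodSet S) (hne : S.Nonempty) :
    ∃ k : ℕ, S.card = 2 ^ k ∧
      ∀ s ∈ S, Squarefree s ∧ s.primeFactors.card = k := by
  obtain ⟨a, ha⟩ := hne
  refine ⟨a.primeFactors.card, hS.card_eq_two_pow ha, fun s hs => ⟨hS.squarefree hs, ?_⟩⟩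
  exact Nat.pow_right_injective le_rfl ((hS.card_eq_two_pow hs).symm.trans (hS.card_eq_two_pow ha))
end
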